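/- In 𝔽₂[t₁,…,t₆], let Q be the product over all subsets S of {1,…,6} of odd cardinality (|S| = 1, 3, or 5) of (1 + Σ_{i∈S} t_i). Then the homogeneous component of Q of degree 32 is congruent to e₆²·(e₅⁴ + e₂⁴e₆² + e₂²e₃²e₅² + e₃⁴e₄²) modulo the ideal generated by e₁. -/

import Mathlib

open MvPolynomial Finset

/-- The `i`-th elementary symmetric polynomial in `𝔽₂[t₁,…,t₆]`. -/
noncomputable def e (i : ℕ) : MvPolynomial (Fin 6) (ZMod 2) :=
  esymm (Fin 6) (ZMod 2) i

/-- `Q`: the product over all subsets `S ⊆ {1,…,6}` of odd cardinality of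
`(1 + Σ_{i∈S} t_i)` in `𝔽₂[t₁,…,t₆]`, representing the mod 2 total Chern class
of `λ¹ ⊕ λ³ ⊕ λ⁵ = r̃₆*((Δ₁₂⁻)_ℂ)` of `SU(6)`. -/
noncomputable def Q : MvPolynomial (Fin 6) (ZMod 2) :=
  ∏ s ∈ (univ : Finset (Fin 6)).powerset.filter (fun s => Odd s.card),
    (1 + ∑ i ∈ s, X i)

/-!
The top component of `Q` is the product of the top Chern classes of `Λ¹ V`, `Λ³ V` and `Λ⁵ V`,
where `V` has rank `6` and Chern roots `tᵢ`. Work modulo `e₁`, so that `det V` is trivial. Since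
signs do not matter modulo `2`, `Λ⁵ V` contributes the same factor `e₆` as `V`, and the
complementary triples make the factor of `Λ³ V` a square. Writing `V = ℓ ⊕ L ⊕ W` with `W` of rank
`4` and `ℓ`, `L` line bundles, a square root of that factor is the product of the top Chern classes
of `Λ³ W`, given by Vieta's formula, and of `L ⊗ Λ² W`, given by a resolvent cubic of the quartic
attached to `W`.
-/

section Multisets

variable {R : Type*}

theorem multiset_esymm_zero [CommSemiring R] (m : Multiset R) : m.esymm 0 = 1 := by
  simp [Multiset.esymm]

theorem multiset_esymm_one [CommSemiring R] (m : Multiset R) : m.esymm 1 = m.sum := by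
  simp [Multiset.esymm, Multiset.powersetCard_one]

theorem multiset_esymm_card [CommSemiring R] (m : Multiset R) : m.esymm m.card = m.prod := by
  simp [Multiset.esymm]

theorem multiset_esymm_of_card_lt [CommSemiring R] {m : Multiset R} {k : ℕ} (h : m.card < k) :
    m.esymm k = 0 := by
  simp [Multiset.esymm, Multiset.powersetCard_eq_empty k h]

theorem multiset_esymm_cons_succ [CommSemiring R] (a : R) (m : Multiset R) (k : ℕ) :
    (a ::ₘ m).esymm (k + 1) = m.esymm (k + 1) + a * m.esymm k := by
  simp [Multiset.esymm, Multiset.sum_map_mul_left]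

theorem map_multiset_esymm {S : Type*} [CommSemiring R] [CommSemiring S] (φ : R →+* S)
    (m : Multiset R) (k : ℕ) : φ (m.esymm k) = (m.map φ).esymm k := by
  simp [Multiset.esymm, Multiset.powersetCard_map, map_multiset_sum, map_multiset_prod]

/-- The product of `z + ∑ s` over the `k`-element sub-multisets `s` of `m`: the top Chern class of
`L ⊗ Λᵏ V`, where `V` has Chern roots `m` and `L` is a line bundle with first Chern class `z`. -/
def exteriorTopChern [CommSemiring R] (k : ℕ) (z : R) (m : Multiset R) : R :=
  ((m.powersetCard k).map fun s => z + s.sum).prod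

theorem map_exteriorTopChern {S : Type*} [CommSemiring R] [CommSemiring S] (φ : R →+* S)
    (k : ℕ) (z : R) (m : Multiset R) :
    φ (exteriorTopChern k z m) = exteriorTopChern k (φ z) (m.map φ) := by
  simp [exteriorTopChern, Multiset.powersetCard_map, map_multiset_sum, map_multiset_prod]

theorem exteriorTopChern_zero [CommSemiring R] (z : R) (m : Multiset R) :
    exteriorTopChern 0 z m = z := by
  simp [exteriorTopChern]

theorem exteriorTopChern_one [CommSemiring R] (z : R) (m : Multiset R) :
    exteriorTopChern 1 z m = (m.map (z + ·)).prod := by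
  simp [exteriorTopChern, Multiset.powersetCard_one]

theorem exteriorTopChern_card [CommSemiring R] (z : R) (m : Multiset R) :
    exteriorTopChern m.card z m = z + m.sum := by
  simp [exteriorTopChern]

-- `Λᵏ⁺¹(V ⊕ ℓ) = Λᵏ⁺¹ V ⊕ (ℓ ⊗ Λᵏ V)` for a line bundle `ℓ`
theorem exteriorTopChern_succ_cons [CommSemiring R] (k : ℕ) (z a : R) (m : Multiset R) :
    exteriorTopChern (k + 1) z (a ::ₘ m) =
      exteriorTopChern (k + 1) z m * exteriorTopChern k (z + a) m := by
  simp [exteriorTopChern, add_assoc]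

-- `Λᵏ V ≅ Λⁿ⁻ᵏ V* ⊗ det V` for `V` of rank `n`
theorem exteriorTopChern_dual [CommRing R] {k l : ℕ} (z : R) (m : Multiset R)
    (hm : m.card = k + l) :
    exteriorTopChern k z m = exteriorTopChern l (z + m.sum) (m.map Neg.neg) := by
  induction m using Multiset.induction_on generalizing k l z with
  | empty =>
    obtain ⟨rfl, rfl⟩ : k = 0 ∧ l = 0 := by simpa using hm.symm
    simp [exteriorTopChern_zero]
  | cons a m ih =>
    rw [Multiset.card_cons] at hm
    rcases k with _ | k
    · obtain rfl : l = ((a ::ₘ m).map Neg.neg).card := by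
        rw [Multiset.card_map, Multiset.card_cons]
        omega
      rw [exteriorTopChern_zero, exteriorTopChern_card, Multiset.sum_map_neg',
        add_neg_cancel_right]
    rcases l with _ | l
    · obtain rfl : k = m.card := by omega
      rw [exteriorTopChern_zero, ← Multiset.card_cons, exteriorTopChern_card]
    have h₁ := ih (k := k + 1) (l := l) z (by omega)
    have h₂ := ih (k := k) (l := l + 1) (z + a) (by omega)
    rw [Multiset.map_cons, exteriorTopChern_succ_cons, exteriorTopChern_succ_cons, h₁, h₂,
      mul_comm, Multiset.sum_cons, add_assoc z, add_comm a, ← add_assoc z, add_neg_cancel_right]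

theorem exteriorTopChern_dual_of_charTwo [CommRing R] [CharP R 2] {k l : ℕ} (z : R)
    (m : Multiset R) (hm : m.card = k + l) :
    exteriorTopChern k z m = exteriorTopChern l (z + m.sum) m := by
  rw [exteriorTopChern_dual z m hm, CharTwo.neg_eq', Multiset.map_id]

theorem exteriorTopChern_middle_cons_of_charTwo [CommRing R] [CharP R 2] {k : ℕ} (a : R)
    (m : Multiset R) (hm : m.card = (k + 1) + k) (hsum : (a ::ₘ m).sum = 0) :
    exteriorTopChern (k + 1) 0 (a ::ₘ m) = exteriorTopChern (k + 1) 0 m ^ 2 := by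
  have ha : a = m.sum := CharTwo.add_eq_zero.1 (by rwa [Multiset.sum_cons] at hsum)
  rw [exteriorTopChern_succ_cons, ha, ← exteriorTopChern_dual_of_charTwo 0 m hm, sq]

theorem exteriorTopChern_one_eq_sum_esymm [CommSemiring R] (z : R) (m : Multiset R) :
    exteriorTopChern 1 z m = ∑ j ∈ range (m.card + 1), m.esymm j * z ^ (m.card - j) := by
  simpa [exteriorTopChern_one, Polynomial.eval_multiset_prod, Polynomial.eval_finsetSum] using
    congr_arg (Polynomial.eval z) m.prod_X_add_C_eq_sum_esymm

/-- For a four-element multiset `m`, the product of `w + (a + b) * (c + d)` over the three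
splittings `m = {a, b} ∪ {c, d}`, expanded in the elementary symmetric functions of `m`. It is a
resolvent cubic of the quartic with roots `m`, up to the sign of `w`. -/
def resolventCubic [CommRing R] (m : Multiset R) (w : R) : R :=
  w ^ 3 + 2 * m.esymm 2 * w ^ 2
    + (m.esymm 2 ^ 2 + m.esymm 1 * m.esymm 3 - 4 * m.esymm 4) * w
    + (m.esymm 1 * m.esymm 2 * m.esymm 3 - m.esymm 1 ^ 2 * m.esymm 4 - m.esymm 3 ^ 2)

theorem resolventCubic_eq_prod [CommRing R] (a b c d w : R) :
    resolventCubic {a, b, c, d} w =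
      (w + (a + b) * (c + d)) * (w + (a + c) * (b + d)) * (w + (a + d) * (b + c)) := by
  simp [resolventCubic, Multiset.esymm, Multiset.powersetCard_one]
  ring

theorem exteriorTopChern_two_eq_resolventCubic [CommRing R] (z : R) (m : Multiset R)
    (hm : m.card = 4) : exteriorTopChern 2 z m = resolventCubic m (z * (z + m.sum)) := by
  obtain ⟨a, b, c, d, rfl⟩ := Multiset.card_eq_four.1 hm
  -- With `w = z * (z + ∑ m)`, a splitting into pairs contributes
  -- `(z + (a + b)) * (z + (c + d)) = w + (a + b) * (c + d)`.
  rw [resolventCubic_eq_prod]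
  simp [exteriorTopChern, Multiset.powersetCard_one]
  ring

theorem exteriorTopChern_three_of_charTwo [CommRing R] [CharP R 2] (m : Multiset R)
    (hm₆ : m.card = 6) (hsum : m.sum = 0) :
    exteriorTopChern 3 0 m =
      (m.esymm 5 ^ 2 + m.esymm 2 ^ 2 * m.esymm 6 + m.esymm 2 * m.esymm 3 * m.esymm 5
        + m.esymm 3 ^ 2 * m.esymm 4) ^ 2 := by
  obtain ⟨y, m₅, rfl, hm₅⟩ := Multiset.card_eq_succ_iff.1 hm₆
  obtain ⟨z, m, rfl, hm⟩ := Multiset.card_eq_succ_iff.1 hm₅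
  have hy : y = z + m.esymm 1 := by
    rw [multiset_esymm_one, ← Multiset.sum_cons]
    exact CharTwo.add_eq_zero.1 (by rwa [Multiset.sum_cons] at hsum)
  have htriples : exteriorTopChern 3 0 m =
      m.esymm 2 * m.esymm 1 ^ 2 + m.esymm 3 * m.esymm 1 + m.esymm 4 := by
    rw [exteriorTopChern_dual_of_charTwo (l := 1) 0 m hm, exteriorTopChern_one_eq_sum_esymm, hm,
      zero_add, ← multiset_esymm_one]
    simp only [sum_range_succ, range_zero, sum_empty, multiset_esymm_zero]
    grind
  rw [exteriorTopChern_middle_cons_of_charTwo y _ hm₅ hsum, exteriorTopChern_succ_cons, htriples,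
    zero_add, exteriorTopChern_two_eq_resolventCubic z m hm, ← multiset_esymm_one,
    resolventCubic]
  have h₅ : m.esymm 5 = 0 := multiset_esymm_of_card_lt (by omega)
  have h₆ : m.esymm 6 = 0 := multiset_esymm_of_card_lt (by omega)
  simp only [multiset_esymm_cons_succ, multiset_esymm_zero, h₅, h₆, hy]
  congr 1
  grind

theorem exteriorTopChern_odd_of_charTwo [CommRing R] [CharP R 2] (m : Multiset R)
    (hm : m.card = 6) (hsum : m.sum = 0) :
    ∏ k ∈ {1, 3, 5}, exteriorTopChern k 0 m =
      m.esymm 6 ^ 2 * (m.esymm 5 ^ 4 + m.esymm 2 ^ 4 * m.esymm 6 ^ 2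
        + m.esymm 2 ^ 2 * m.esymm 3 ^ 2 * m.esymm 5 ^ 2 + m.esymm 3 ^ 4 * m.esymm 4 ^ 2) := by
  have h₁ : exteriorTopChern 1 0 m = m.esymm 6 := by
    rw [exteriorTopChern_one, ← hm, multiset_esymm_card]
    simp
  have h₅ : exteriorTopChern 5 0 m = exteriorTopChern 1 0 m := by
    rw [exteriorTopChern_dual_of_charTwo (l := 1) 0 m hm, hsum, add_zero]
  rw [prod_insert (by decide), prod_pair (by decide), h₅, h₁,
    exteriorTopChern_three_of_charTwo m hm hsum, CharTwo.add_sq, CharTwo.add_sq, CharTwo.add_sq]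
  ring

theorem exteriorTopChern_odd_sub_mem_span_of_charTwo [CommRing R] [CharP R 2] (m : Multiset R)
    (hm : m.card = 6) :
    (∏ k ∈ {1, 3, 5}, exteriorTopChern k 0 m) -
      m.esymm 6 ^ 2 * (m.esymm 5 ^ 4 + m.esymm 2 ^ 4 * m.esymm 6 ^ 2
        + m.esymm 2 ^ 2 * m.esymm 3 ^ 2 * m.esymm 5 ^ 2 + m.esymm 3 ^ 4 * m.esymm 4 ^ 2)
      ∈ Ideal.span {m.esymm 1} := by
  obtain hI | hI := eq_or_ne (Ideal.span {m.esymm 1}) ⊤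
  · exact hI ▸ Submodule.mem_top
  have := Ideal.Quotient.nontrivial_iff.2 hI
  let φ := Ideal.Quotient.mk (Ideal.span {m.esymm 1})
  have : CharP (R ⧸ Ideal.span {m.esymm 1}) 2 :=
    CharTwo.of_one_ne_zero_of_two_eq_zero one_ne_zero <| by
      rw [← map_ofNat φ 2, CharTwo.two_eq_zero, map_zero]
  have hsum : (m.map φ).sum = 0 := by
    rw [← map_multiset_sum, ← multiset_esymm_one]
    exact Ideal.Quotient.eq_zero_iff_mem.2 (Ideal.mem_span_singleton_self _)
  refine Ideal.Quotient.eq.1 (?_ : φ _ = φ _)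
  simp only [map_prod, map_mul, map_add, map_pow, map_multiset_esymm,
    map_exteriorTopChern, map_zero]
  exact exteriorTopChern_odd_of_charTwo (m.map φ) (by rwa [Multiset.card_map]) hsum

end Multisets

theorem exteriorTopChern_map_val {σ R : Type*} [CommSemiring R] (k : ℕ) (z : R) (f : σ → R)
    (s : Finset σ) :
    exteriorTopChern k z (s.val.map f) = ∏ t ∈ s.powersetCard k, (z + ∑ i ∈ t, f i) := by
  simp only [exteriorTopChern, Multiset.powersetCard_map, ← Finset.map_val_val_powersetCard,
    Multiset.map_map, Function.comp_apply, Finset.sum_map_val, Finset.prod_map_val]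

@[to_additive]
theorem prod_powerset_filter_card {α M : Type*} [CommMonoid M] (p : ℕ → Prop) [DecidablePred p]
    (s : Finset α) (f : Finset α → M) :
    ∏ t ∈ s.powerset with p #t, f t =
      ∏ k ∈ range (#s + 1) with p k, ∏ t ∈ s.powersetCard k, f t := by
  rw [prod_filter, prod_powerset, prod_filter]
  refine prod_congr rfl fun k _ => ?_
  split_ifs with hk
  · exact prod_congr rfl fun t ht => if_pos ((mem_powersetCard.1 ht).2 ▸ hk)
  · exact prod_eq_one fun t ht => if_neg ((mem_powersetCard.1 ht).2 ▸ hk)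

section TopDegree

variable {σ K : Type*} [CommSemiring K]

theorem homogeneousComponent_mul_of_totalDegree_le {p q : MvPolynomial σ K} {m n : ℕ}
    (hp : p.totalDegree ≤ m) (hq : q.totalDegree ≤ n) :
    homogeneousComponent (m + n) (p * q) =
      homogeneousComponent m p * homogeneousComponent n q := by
  classical
  ext d
  have hp' (a : σ →₀ ℕ) (ha : coeff a p ≠ 0) : a.degree ≤ m :=
    (le_totalDegree (mem_support_iff.2 ha)).trans hp
  have hq' (a : σ →₀ ℕ) (ha : coeff a q ≠ 0) : a.degree ≤ n :=
    (le_totalDegree (mem_support_iff.2 ha)).trans hq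
  simp only [coeff_homogeneousComponent, coeff_mul, Finset.ite_sum_zero]
  refine sum_congr rfl fun ⟨a, b⟩ hab => ?_
  obtain rfl : a + b = d := mem_antidiagonal.1 hab
  by_cases ha : coeff a p = 0
  · simp [ha]
  by_cases hb : coeff b q = 0
  · simp [hb]
  have hab_iff : a.degree + b.degree = m + n ↔ a.degree = m ∧ b.degree = n := by
    have := hp' a ha
    have := hq' b hb
    omega
  simp only [map_add, hab_iff, ite_and, mul_ite, ite_mul, zero_mul, mul_zero]
  split_ifs <;> rfl

theorem homogeneousComponent_prod_of_totalDegree_le {ι : Type*} (s : Finset ι)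
    (p : ι → MvPolynomial σ K) (n : ι → ℕ) (hp : ∀ i ∈ s, (p i).totalDegree ≤ n i) :
    homogeneousComponent (∑ i ∈ s, n i) (∏ i ∈ s, p i) =
      ∏ i ∈ s, homogeneousComponent (n i) (p i) := by
  classical
  induction s using Finset.induction_on with
  | empty => simp [homogeneousComponent_zero]
  | insert i s hi ih =>
    rw [Finset.forall_mem_insert] at hp
    have hprod : (∏ j ∈ s, p j).totalDegree ≤ ∑ j ∈ s, n j :=
      (totalDegree_finsetProd s p).trans (sum_le_sum hp.2)
    rw [sum_insert hi, prod_insert hi, prod_insert hi,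
      homogeneousComponent_mul_of_totalDegree_le hp.1 hprod, ih hp.2]

theorem homogeneousComponent_card_prod_one_add {ι : Type*} (s : Finset ι)
    (L : ι → MvPolynomial σ K) (hL : ∀ i ∈ s, (L i).IsHomogeneous 1) :
    homogeneousComponent #s (∏ i ∈ s, (1 + L i)) = ∏ i ∈ s, L i := by
  have hdeg : ∀ i ∈ s, (1 + L i).totalDegree ≤ 1 := fun i hi =>
    (totalDegree_add _ _).trans (max_le (by simp) (hL i hi).totalDegree_le)
  rw [card_eq_sum_ones, homogeneousComponent_prod_of_totalDegree_le s _ _ hdeg]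
  refine prod_congr rfl fun i hi => ?_
  rw [map_add, homogeneousComponent_eq_zero 1 1 (by simp), zero_add,
    homogeneousComponent_eq_self (hL i hi)]

end TopDegree

theorem homogeneousComponent_card_prod_one_add_sum_X {σ K : Type*} [Fintype σ] [CommSemiring K]
    (p : ℕ → Prop) [DecidablePred p] :
    homogeneousComponent #{s ∈ (univ : Finset σ).powerset | p #s}
        (∏ s ∈ (univ : Finset σ).powerset with p #s, (1 + ∑ i ∈ s, X i : MvPolynomial σ K)) =
      ∏ k ∈ range (Fintype.card σ + 1) with p k, exteriorTopChern k 0 (univ.val.map X) := by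
  rw [homogeneousComponent_card_prod_one_add _ _ fun s _ =>
      IsHomogeneous.sum _ _ _ fun i _ => isHomogeneous_X K i,
    prod_powerset_filter_card, card_univ]
  simp only [exteriorTopChern_map_val, zero_add]

theorem c32_spinrep_minus_SU6_general {σ K : Type*} [Fintype σ] [CommRing K] [CharP K 2]
    (hσ : Fintype.card σ = 6) :
    homogeneousComponent 32
        (∏ s ∈ (univ : Finset σ).powerset with Odd #s, (1 + ∑ i ∈ s, X i : MvPolynomial σ K)) -
      esymm σ K 6 ^ 2 * (esymm σ K 5 ^ 4 + esymm σ K 2 ^ 4 * esymm σ K 6 ^ 2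
        + esymm σ K 2 ^ 2 * esymm σ K 3 ^ 2 * esymm σ K 5 ^ 2
        + esymm σ K 3 ^ 4 * esymm σ K 4 ^ 2)
      ∈ Ideal.span {esymm σ K 1} := by
  have hodd : {k ∈ range (Fintype.card σ + 1) | Odd k} = {1, 3, 5} := by
    rw [hσ]; decide
  have hcard : #{s ∈ (univ : Finset σ).powerset | Odd #s} = 32 := by
    rw [card_eq_sum_ones, sum_powerset_filter_card, card_univ, hodd]
    simp [hσ, Nat.choose]
  rw [← hcard, homogeneousComponent_card_prod_one_add_sum_X, hodd, esymm_eq_multiset_esymm]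
  exact exteriorTopChern_odd_sub_mem_span_of_charTwo _ (by simpa using hσ)

/-- the degree-32 homogeneous component of `Q` is congruent to
`e₆²·(e₅⁴ + e₂⁴e₆² + e₂²e₃²e₅² + e₃⁴e₄²)` modulo the ideal `(e₁)`. -/
theorem c32_spinrep_minus_SU6 :
    homogeneousComponent 32 Q -
      e 6 ^ 2 * (e 5 ^ 4 + e 2 ^ 4 * e 6 ^ 2 + e 2 ^ 2 * e 3 ^ 2 * e 5 ^ 2
        + e 3 ^ 4 * e 4 ^ 2)
      ∈ Ideal.span {e 1} :=
  c32_spinrep_minus_SU6_general (Fintype.card_fin 6)
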